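/- arXiv:1409.6445 — 5 statements merged into one kernel-verified Lean document; each statement's English description precedes it below -/
import Mathlib

section
/- Let N ≥ 2 be finite and let Q = (q_ij) be an irreducible conservative Q-matrix on S = {1,…,N} with (unique) stationary distribution μ = (μ_1,…,μ_N). Let β = (β_1,…,β_N) ∈ ℝ^N satisfy the averaging condition Σ_{i=1}^N μ_i β_i < 0 and max_{i∈S} β_i ≤ 0. Then for every p > 0 one has η_p > 0, where η_p := −max{Re γ : γ is a (complex) eigenvalue of Q_p} and Q_p := Q + (p/2)·diag(β_1,…,β_N). -/
/-- `Q` has nonnegative off-diagonal entries and every row sums to zero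
(a conservative Q-matrix). -/
def IsConservativeQMatrix {N : ℕ} (Q : Matrix (Fin N) (Fin N) ℝ) : Prop :=
  (∀ i j, i ≠ j → 0 ≤ Q i j) ∧ ∀ i, ∑ j, Q i j = 0

/-- Irreducibility: any two distinct states are connected by a finite chain of
transitions with strictly positive rates. -/
def MatrixIrreducible {N : ℕ} (Q : Matrix (Fin N) (Fin N) ℝ) : Prop :=
  ∀ i j : Fin N, i ≠ j → ∃ (k : ℕ) (c : ℕ → Fin N),
    c 0 = i ∧ c k = j ∧ ∀ l < k, 0 < Q (c l) (c (l + 1))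

/-- The set of real parts of the (complex) eigenvalues of a real matrix. -/
def spectrumRe {N : ℕ} (M : Matrix (Fin N) (Fin N) ℝ) : Set ℝ :=
  {x : ℝ | ∃ γ ∈ spectrum ℂ (M.map Complex.ofReal), γ.re = x}

theorem stmt0 {N : ℕ} (hN : 2 ≤ N)
    (Q : Matrix (Fin N) (Fin N) ℝ)
    (hQ : IsConservativeQMatrix Q) (hirr : MatrixIrreducible Q)
    (μ : Fin N → ℝ) (hμpos : ∀ i, 0 < μ i) (hμsum : ∑ i, μ i = 1)
    (hμstat : ∀ j, ∑ i, μ i * Q i j = 0)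
    (β : Fin N → ℝ) (havg : ∑ i, μ i * β i < 0) (hβ : ∀ i, β i ≤ 0)
    (p : ℝ) (hp : 0 < p) (ηp : ℝ)
    (hη : IsGreatest (spectrumRe (Q + (p / 2) • Matrix.diagonal β)) (-ηp)) :
    0 < ηp := by
  by_contra hcon
  push Not at hcon
  obtain ⟨⟨γ, hγ, hre⟩, -⟩ := hη
  obtain ⟨hoff, hrow⟩ := hQ
  rw [← Matrix.spectrum_toLin', ← Module.End.hasEigenvalue_iff_mem_spectrum] at hγ
  obtain ⟨v, hv⟩ := hγ.exists_hasEigenvector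
  have hv0 : v ≠ 0 := hv.2
  have hev := hv.apply_eq_smul
  have hev' : ∀ i, ∑ j, (Q i j : ℂ) * v j + (p / 2 * β i : ℝ) * v i = γ * v i := by
    intro i
    have h := congrFun hev i
    simp only [Matrix.toLin'_apply, Matrix.mulVec, dotProduct, Matrix.map_apply, Matrix.add_apply,
      Matrix.smul_apply, Matrix.diagonal_apply, Pi.smul_apply, smul_eq_mul, Complex.ofReal_add,
      add_mul, Finset.sum_add_distrib] at h
    rw [← h]
    congr 1
    rw [Finset.sum_eq_single i]
    · simp
    · intro j _ hj
      simp [hj.symm]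
    · simp
  haveI : Nonempty (Fin N) := ⟨⟨0, by omega⟩⟩
  obtain ⟨i0, hi0⟩ := Finite.exists_max (fun i => ‖v i‖)
  have hm : 0 < ‖v i0‖ := by
    obtain ⟨j, hj⟩ := Function.ne_iff.mp hv0
    exact lt_of_lt_of_le (norm_pos_iff.mpr hj) (hi0 j)
  set m := ‖v i0‖ with hmdef
  have key : ∀ i, ‖v i‖ = m → β i = 0 ∧ ∀ j, 0 < Q i j → ‖v j‖ = m := by
    intro i hi
    have e1 : (γ - (Q i i : ℂ) - (p / 2 * β i : ℝ)) * v i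
        = ∑ j ∈ Finset.univ.erase i, (Q i j : ℂ) * v j := by
      have h := hev' i
      rw [← Finset.add_sum_erase _ _ (Finset.mem_univ i)] at h
      linear_combination -h
    have e2 : Q i i + ∑ j ∈ Finset.univ.erase i, Q i j = 0 := by
      rw [Finset.add_sum_erase _ _ (Finset.mem_univ i)]; exact hrow i
    have e3 : (γ.re - Q i i - p / 2 * β i) * m ≤ ∑ j ∈ Finset.univ.erase i, Q i j * ‖v j‖ := by
      calc (γ.re - Q i i - p / 2 * β i) * m
          ≤ ‖γ - (Q i i : ℂ) - (p / 2 * β i : ℝ)‖ * m := by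
            gcongr
            refine le_trans (le_of_eq ?_) (Complex.re_le_norm _)
            simp only [Complex.sub_re, Complex.ofReal_re]
        _ = ‖∑ j ∈ Finset.univ.erase i, (Q i j : ℂ) * v j‖ := by
            rw [← e1, norm_mul, hi]
        _ ≤ ∑ j ∈ Finset.univ.erase i, ‖(Q i j : ℂ) * v j‖ := norm_sum_le _ _
        _ = _ := by
            refine Finset.sum_congr rfl fun j hj => ?_
            rw [norm_mul, Complex.norm_real, Real.norm_of_nonneg]
            exact hoff i j (Finset.ne_of_mem_erase hj).symm
    have e4 : ∀ j ∈ Finset.univ.erase i, 0 ≤ Q i j * (m - ‖v j‖) := fun j hj =>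
      mul_nonneg (hoff i j (Finset.ne_of_mem_erase hj).symm) (sub_nonneg.mpr (hi0 j))
    have e5 : ∑ j ∈ Finset.univ.erase i, Q i j * (m - ‖v j‖)
        = -Q i i * m - ∑ j ∈ Finset.univ.erase i, Q i j * ‖v j‖ := by
      simp only [mul_sub, Finset.sum_sub_distrib, ← Finset.sum_mul]
      linear_combination m * e2
    have e6 := Finset.sum_nonneg e4
    have hb : 0 ≤ (-(p / 2 * β i)) * m :=
      mul_nonneg (by have := hβ i; nlinarith) hm.le
    have hr : 0 ≤ γ.re * m := mul_nonneg (by linarith) hm.le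
    have e7 : ∑ j ∈ Finset.univ.erase i, Q i j * (m - ‖v j‖) = 0 := by
      nlinarith
    have e8 : (-(p / 2 * β i)) * m = 0 := by nlinarith
    refine ⟨?_, ?_⟩
    · have : p / 2 ≠ 0 := by positivity
      simpa [hm.ne', this, hp.ne'] using e8
    · intro j hj
      by_cases hji : j = i
      · rw [hji, hi]
      · have := (Finset.sum_eq_zero_iff_of_nonneg e4).mp e7 j (by simp [hji])
        rcases mul_eq_zero.mp this with h | h
        · exact absurd h hj.ne'
        · linarith
  have hall : ∀ i, ‖v i‖ = m := by
    intro i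
    by_cases hi : i0 = i
    · rw [← hi]
    obtain ⟨k, c, hc0, hck, hc⟩ := hirr i0 i hi
    have : ∀ l, l ≤ k → ‖v (c l)‖ = m := by
      intro l
      induction l with
      | zero => intro _; rw [hc0]
      | succ l ih => intro hl; exact (key _ (ih (by omega))).2 _ (hc l (by omega))
    rw [← hck]; exact this k le_rfl
  have : ∑ i, μ i * β i = 0 := Finset.sum_eq_zero fun i _ => by rw [(key i (hall i)).1, mul_zero]
  linarith
end

section
/- Let S = {1,…,N} with 2 ≤ N < ∞, let Q = (q_ij) be an irreducible conservative Q-matrix on S which is reversible with respect to a probability measure π on S (π_i q_ij = π_j q_ji, π_i > 0, Σ_i π_i = 1), and let β ∈ ℝ^N. Define D(f) := (1/2)Σ_{i,j} π_i q_ij (f_j − f_i)² − Σ_i π_i β_i f_i² and λ_0 := inf{D(f) : Σ_i π_i f_i² = 1}. If there exist λ > 0 and a vector ξ ∈ ℝ^N with ξ_i > 0 for all i such that Σ_j q_ij ξ_j + β_i ξ_i ≤ −λ ξ_i for every i ∈ S, then λ_0 ≥ λ. -/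
/-- The bilinear form `D(f) = (1/2) Σ_{i,j} π_i q_ij (f_j - f_i)² - Σ_i π_i β_i f_i²`. -/
noncomputable def Dform {N : ℕ} (π : Fin N → ℝ) (Q : Matrix (Fin N) (Fin N) ℝ)
    (β : Fin N → ℝ) (f : Fin N → ℝ) : ℝ :=
  (1 / 2) * ∑ i, ∑ j, π i * Q i j * (f j - f i) ^ 2 - ∑ i, π i * β i * f i ^ 2

/-- The principal eigenvalue `λ₀ = inf {D(f) : Σ_i π_i f_i² = 1}`. -/
noncomputable def principalEigenvalue {N : ℕ} (π : Fin N → ℝ)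
    (Q : Matrix (Fin N) (Fin N) ℝ) (β : Fin N → ℝ) : ℝ :=
  sInf {y : ℝ | ∃ f : Fin N → ℝ, ∑ i, π i * f i ^ 2 = 1 ∧ Dform π Q β f = y}

theorem stmt13 {N : ℕ} (hN : 2 ≤ N)
    (Q : Matrix (Fin N) (Fin N) ℝ)
    (hQ : IsConservativeQMatrix Q) (hirr : MatrixIrreducible Q)
    (π : Fin N → ℝ) (hπpos : ∀ i, 0 < π i) (hπsum : ∑ i, π i = 1)
    (hrev : ∀ i j, π i * Q i j = π j * Q j i)
    (β : Fin N → ℝ)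
    (lam : ℝ) (hlam : 0 < lam)
    (ξ : Fin N → ℝ) (hξpos : ∀ i, 0 < ξ i)
    (hξ : ∀ i, (∑ j, Q i j * ξ j) + β i * ξ i ≤ -lam * ξ i) :
    lam ≤ principalEigenvalue π Q β := by
  unfold principalEigenvalue
  apply le_csInf
  · exact ⟨_, fun _ => 1, by simpa using hπsum, rfl⟩
  rintro y ⟨f, hf, rfl⟩
  unfold Dform
  obtain ⟨hoff, hrow⟩ := hQ
  have hx : ∀ i, ξ i ≠ 0 := fun i => (hξpos i).ne'
  have key : ∀ i j, 0 ≤ π i * Q i j * ((f j - f i) ^ 2 + f i ^ 2 * (ξ j / ξ i)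
      + f j ^ 2 * (ξ i / ξ j) - f i ^ 2 - f j ^ 2) := by
    intro i j
    by_cases hij : i = j
    · subst hij
      apply le_of_eq
      rw [div_self (hx i)]
      ring
    · apply mul_nonneg (mul_nonneg (hπpos i).le (hoff i j hij))
      have h1 := hx i
      have h2 := hx j
      have e : (f j - f i) ^ 2 + f i ^ 2 * (ξ j / ξ i) + f j ^ 2 * (ξ i / ξ j) - f i ^ 2 - f j ^ 2
          = (f i * ξ j - f j * ξ i) ^ 2 / (ξ i * ξ j) := by
        field_simp
        ring
      rw [e]
      exact div_nonneg (sq_nonneg _) (mul_pos (hξpos i) (hξpos j)).le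
  have hsum : 0 ≤ ∑ i, ∑ j, π i * Q i j * ((f j - f i) ^ 2 + f i ^ 2 * (ξ j / ξ i)
      + f j ^ 2 * (ξ i / ξ j) - f i ^ 2 - f j ^ 2) :=
    Finset.sum_nonneg fun i _ => Finset.sum_nonneg fun j _ => key i j
  have hA : ∑ i, ∑ j, π i * Q i j * f i ^ 2 = 0 := by
    apply Finset.sum_eq_zero
    intro i _
    rw [← Finset.sum_mul, ← Finset.mul_sum, hrow]
    ring
  have hB : ∑ i, ∑ j, π i * Q i j * f j ^ 2 = 0 := by
    rw [Finset.sum_comm, ← hA]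
    refine Finset.sum_congr rfl fun i _ => Finset.sum_congr rfl fun j _ => ?_
    rw [hrev]
  have hC : ∑ i, ∑ j, π i * Q i j * (f j ^ 2 * (ξ i / ξ j))
      = ∑ i, ∑ j, π i * Q i j * (f i ^ 2 * (ξ j / ξ i)) := by
    rw [Finset.sum_comm]
    refine Finset.sum_congr rfl fun i _ => Finset.sum_congr rfl fun j _ => ?_
    rw [hrev]
  simp only [mul_sub, mul_add, Finset.sum_sub_distrib, Finset.sum_add_distrib] at hsum
  rw [hA, hB, hC] at hsum
  have hD : ∑ i, ∑ j, π i * Q i j * (f i ^ 2 * (ξ j / ξ i)) + ∑ i, π i * β i * f i ^ 2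
      ≤ ∑ i, -lam * (π i * f i ^ 2) := by
    rw [← Finset.sum_add_distrib]
    apply Finset.sum_le_sum
    intro i _
    have h0 : 0 ≤ π i * f i ^ 2 / ξ i :=
      div_nonneg (mul_nonneg (hπpos i).le (sq_nonneg _)) (hξpos i).le
    have h := mul_le_mul_of_nonneg_left (hξ i) h0
    have h1 := hx i
    have e1 : ∑ j, π i * Q i j * (f i ^ 2 * (ξ j / ξ i))
        = π i * f i ^ 2 / ξ i * ∑ j, Q i j * ξ j := by
      rw [Finset.mul_sum]
      refine Finset.sum_congr rfl fun j _ => ?_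
      ring
    have e2 : π i * β i * f i ^ 2 = π i * f i ^ 2 / ξ i * (β i * ξ i) := by
      field_simp
    have e3 : -lam * (π i * f i ^ 2) = π i * f i ^ 2 / ξ i * (-lam * ξ i) := by
      field_simp
    rw [e1, e2, e3, ← mul_add]
    exact h
  rw [← Finset.mul_sum, hf] at hD
  linarith
end

section
/- Let (E,d) be a complete separable metric space with its Borel σ-algebra and let p ∈ (0,1]. For probability measures μ, ν on E define the Wasserstein quantity W_p(μ,ν) := inf{∫_{E×E} d(x,y)^p dπ(x,y) : π a coupling of μ and ν} ∈ [0,∞]. Let K be a Markov (probability) kernel from E to E such that (x,y) ↦ W_p(K(x), K(y)) is Borel measurable on E×E. Then for all probability measures μ, ν on E: W_p(μK, νK) ≤ ∫_E ∫_E W_p(K(x), K(y)) μ(dx) ν(dy), where μK denotes the probability measure A ↦ ∫_E K(x,A) μ(dx). -/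
open MeasureTheory
open scoped ENNReal

/-- The Wasserstein quantity
`W_p(μ, ν) = inf {∫ d(x,y)^p dπ : π a coupling of μ and ν}` (with values in
`[0,∞]`), a coupling being a measure on `E × E` with marginals `μ` and `ν`. -/
noncomputable def Wp {E : Type*} [MeasurableSpace E] [PseudoMetricSpace E]
    (p : ℝ) (μ ν : Measure E) : ℝ≥0∞ :=
  sInf {c : ℝ≥0∞ | ∃ π : Measure (E × E),
    π.map Prod.fst = μ ∧ π.map Prod.snd = ν ∧
    ∫⁻ q, ENNReal.ofReal (dist q.1 q.2 ^ p) ∂π = c}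

open ProbabilityTheory Filter Topology TopologicalSpace in
theorem slln_aux {F : Type*} [MeasurableSpace F] (P : Measure F) [IsProbabilityMeasure P]
    (g : F → ℝ≥0∞) (hg : Measurable g) (hfin : ∫⁻ x, g x ∂P ≠ ∞) :
    ∀ᵐ ω ∂(Measure.infinitePi (fun _ : ℕ => P)), (∀ i, g (ω i) ≠ ∞) ∧
      Tendsto (fun n : ℕ => ((n + 1 : ℕ) : ℝ≥0∞)⁻¹ * ∑ i ∈ Finset.range (n + 1), g (ω i)) atTop
        (𝓝 (∫⁻ x, g x ∂P)) := by
  set Q := Measure.infinitePi (fun _ : ℕ => P) with hQ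
  have hmp : ∀ i, MeasurePreserving (fun ω : ℕ → F => ω i) Q P := fun i =>
    measurePreserving_eval_infinitePi (fun _ : ℕ => P) i
  have hae : ∀ᵐ ω ∂Q, ∀ i, g (ω i) ≠ ∞ := by
    rw [ae_all_iff]
    intro i
    have h1 : ∀ᵐ x ∂P, g x ≠ ∞ := by
      filter_upwards [ae_lt_top hg hfin] with x hx using hx.ne
    exact (hmp i).quasiMeasurePreserving.ae h1
  have hint : Integrable (fun x => (g x).toReal) P :=
    integrable_toReal_of_lintegral_ne_top hg.aemeasurable hfin
  have hgm : Measurable (fun x => (g x).toReal) := hg.ennreal_toReal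
  have hind : iIndepFun (fun (i : ℕ) (ω : ℕ → F) => (g (ω i)).toReal) Q :=
    iIndepFun_infinitePi (P := fun _ : ℕ => P) (X := fun _ x => (g x).toReal) (fun _ => hgm)
  have hid : ∀ i, IdentDistrib (fun ω : ℕ → F => (g (ω i)).toReal)
      (fun ω : ℕ → F => (g (ω 0)).toReal) Q Q := by
    intro i
    refine ⟨(hgm.comp (measurable_pi_apply i)).aemeasurable,
      (hgm.comp (measurable_pi_apply 0)).aemeasurable, ?_⟩
    have h : ∀ j, Q.map (fun ω : ℕ → F => (g (ω j)).toReal) = P.map (fun x => (g x).toReal) := by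
      intro j
      rw [← (hmp j).map_eq, Measure.map_map hgm (measurable_pi_apply j)]
      rfl
    rw [h, h]
  have hs := strong_law_ae_real (μ := Q) (fun (i : ℕ) (ω : ℕ → F) => (g (ω i)).toReal)
    ((hmp 0).integrable_comp_of_integrable hint)
    (fun i j hij => hind.indepFun hij) hid
  have hval : ∫ ω, (g (ω 0)).toReal ∂Q = (∫⁻ x, g x ∂P).toReal := by
    rw [← integral_toReal hg.aemeasurable (ae_lt_top hg hfin), ← (hmp 0).map_eq,
      integral_map (measurable_pi_apply 0).aemeasurable hgm.aestronglyMeasurable]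
  filter_upwards [hae, hs] with ω h1 h2
  refine ⟨h1, ?_⟩
  simp only [hval] at h2
  have h3 := ENNReal.tendsto_ofReal (h2.comp (tendsto_add_atTop_nat 1))
  rw [ENNReal.ofReal_toReal hfin] at h3
  refine h3.congr fun n => ?_
  simp only [Function.comp]
  rw [← ENNReal.toReal_sum (fun i _ => h1 i), ENNReal.ofReal_div_of_pos (by positivity),
    ENNReal.ofReal_toReal (ENNReal.sum_ne_top.2 fun i _ => h1 i), ENNReal.ofReal_natCast,
    ENNReal.div_eq_inv_mul]

noncomputable def avgM {F : Type*} [MeasurableSpace F] (m : ℕ → Measure F) (n : ℕ) : Measure F :=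
  ((n + 1 : ℕ) : ℝ≥0∞)⁻¹ • ∑ i ∈ Finset.range (n + 1), m i

theorem avgM_apply {F : Type*} [MeasurableSpace F] (m : ℕ → Measure F) (n : ℕ) (s : Set F) :
    avgM m n s = ((n + 1 : ℕ) : ℝ≥0∞)⁻¹ * ∑ i ∈ Finset.range (n + 1), m i s := by
  simp [avgM]

theorem avgM_lintegral {F : Type*} [MeasurableSpace F] (m : ℕ → Measure F) (n : ℕ)
    (f : F → ℝ≥0∞) :
    ∫⁻ x, f x ∂(avgM m n) =
      ((n + 1 : ℕ) : ℝ≥0∞)⁻¹ * ∑ i ∈ Finset.range (n + 1), ∫⁻ x, f x ∂(m i) := by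
  rw [avgM, lintegral_smul_measure, lintegral_finsetSum_measure, smul_eq_mul]

theorem avgM_map {F G : Type*} [MeasurableSpace F] [MeasurableSpace G] (m : ℕ → Measure F) (n : ℕ)
    (f : F → G) (hf : Measurable f) :
    (avgM m n).map f = avgM (fun i => (m i).map f) n := by
  ext s hs
  rw [Measure.map_apply hf hs, avgM_apply, avgM_apply]
  simp only [Measure.map_apply hf hs]

theorem avgM_const (n : ℕ) (c : ℝ≥0∞) :
    ((n + 1 : ℕ) : ℝ≥0∞)⁻¹ * ∑ _i ∈ Finset.range (n + 1), c = c := by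
  rw [Finset.sum_const, Finset.card_range, nsmul_eq_mul, ← mul_assoc, ENNReal.inv_mul_cancel,
    one_mul]
  · simp
  · exact ENNReal.natCast_ne_top _

theorem avgM_prob {F : Type*} [MeasurableSpace F] (m : ℕ → Measure F)
    (hm : ∀ i, IsProbabilityMeasure (m i)) (n : ℕ) : IsProbabilityMeasure (avgM m n) := by
  refine ⟨?_⟩
  rw [avgM_apply]
  simp only [measure_univ]
  exact avgM_const n 1

noncomputable def avgPM {F : Type*} [MeasurableSpace F] (m : ℕ → Measure F)
    (hm : ∀ i, IsProbabilityMeasure (m i)) (n : ℕ) : ProbabilityMeasure F :=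
  ⟨avgM m n, avgM_prob m hm n⟩

open ProbabilityTheory Filter Topology TopologicalSpace in
theorem weak_aux {E F : Type*} [MetricSpace E] [SeparableSpace E] [MeasurableSpace E] [BorelSpace E]
    [MeasurableSpace F] (P : Measure F) [IsProbabilityMeasure P] (k : F → Measure E)
    (hk : Measurable k) (hkp : ∀ x, IsProbabilityMeasure (k x)) (ρ : ProbabilityMeasure E)
    (hρ : (ρ : Measure E) = P.bind k) :
    ∀ᵐ ω ∂(Measure.infinitePi (fun _ : ℕ => P)),
      Tendsto (fun n => avgPM (fun i => k (ω i)) (fun i => hkp _) n) atTop (𝓝 ρ) := by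
  haveI : SecondCountableTopology E := UniformSpace.secondCountable_of_separable E
  let S : Set (Set E) := Set.sInter '' {f | f.Finite ∧ f ⊆ countableBasis E}
  have hSc : S.Countable :=
    (Set.countable_ofPred_finite_subset (countable_countableBasis E)).image _
  have hopen : ∀ s ∈ S, IsOpen s := by
    rintro s ⟨f, ⟨hf, hfb⟩, rfl⟩
    exact hf.isOpen_sInter fun t ht => isOpen_of_mem_countableBasis (hfb ht)
  have hpi : IsPiSystem S := by
    rintro s ⟨f, ⟨hf, hfb⟩, rfl⟩ t ⟨g, ⟨hg, hgb⟩, rfl⟩ -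
    exact ⟨f ∪ g, ⟨hf.union hg, Set.union_subset hfb hgb⟩, Set.sInter_union f g⟩
  have key : ∀ᵐ ω ∂(Measure.infinitePi (fun _ : ℕ => P)), ∀ s ∈ S,
      Tendsto (fun n : ℕ => ((n + 1 : ℕ) : ℝ≥0∞)⁻¹ * ∑ i ∈ Finset.range (n + 1), k (ω i) s) atTop
        (𝓝 (∫⁻ x, k x s ∂P)) := by
    rw [ae_ball_iff hSc]
    intro s hs
    have hms := (hopen s hs).measurableSet
    have hb : ∫⁻ x, k x s ∂P ≠ ∞ := by
      have : ∫⁻ x, k x s ∂P ≤ ∫⁻ x, 1 ∂P := lintegral_mono fun x => prob_le_one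
      refine (this.trans_lt ?_).ne
      simp
    filter_upwards [slln_aux P (fun x => k x s) ((Measure.measurable_coe hms).comp hk) hb]
      with ω hω using hω.2
  filter_upwards [key] with ω hω
  refine hpi.tendsto_probabilityMeasure_of_tendsto_of_mem (fun s hs => (hopen s hs).measurableSet)
    ?_ ?_
  · intro u hu x hx
    obtain ⟨v, hv, hxv, hvu⟩ := (isBasis_countableBasis E).exists_subset_of_mem_open hx hu
    exact ⟨v, ⟨{v}, ⟨Set.finite_singleton v, by simpa using hv⟩, by simp⟩,
      (isOpen_of_mem_countableBasis hv).mem_nhds hxv, hvu⟩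
  · intro s hs
    have h := hω s hs
    rw [← Measure.bind_apply (hopen s hs).measurableSet hk.aemeasurable, ← hρ] at h
    rw [← ENNReal.tendsto_coe]
    simp only [ProbabilityMeasure.ennreal_coeFn_eq_coeFn_toMeasure]
    refine h.congr fun n => ?_
    exact (avgM_apply _ _ _).symm

open ProbabilityTheory Filter Topology TopologicalSpace in
theorem tight_range {E : Type*} [MetricSpace E] [CompleteSpace E] [SeparableSpace E]
    [MeasurableSpace E] [BorelSpace E] (m : ℕ → ProbabilityMeasure E) (ρ : ProbabilityMeasure E)
    (h : Tendsto m atTop (𝓝 ρ)) :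
    IsTightMeasureSet {((q : ProbabilityMeasure E) : Measure E) | q ∈ Set.range m} := by
  haveI : SecondCountableTopology E := UniformSpace.secondCountable_of_separable E
  apply isTightMeasureSet_of_isCompact_closure
  have hc := h.isCompact_insert_range
  exact hc.of_isClosed_subset isClosed_closure
    (closure_minimal (Set.subset_insert _ _) hc.isClosed)

open ProbabilityTheory Filter Topology TopologicalSpace in
theorem lsc_aux {E : Type*} [MetricSpace E] [CompleteSpace E] [SeparableSpace E]
    [MeasurableSpace E] [BorelSpace E] (p : ℝ) (hp : 0 < p)
    (m1 m2 : ℕ → ProbabilityMeasure E) (ρ1 ρ2 : ProbabilityMeasure E)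
    (h1 : Tendsto m1 atTop (𝓝 ρ1)) (h2 : Tendsto m2 atTop (𝓝 ρ2))
    (π : ℕ → ProbabilityMeasure (E × E))
    (hf : ∀ n, (π n : Measure (E × E)).map Prod.fst = m1 n)
    (hs : ∀ n, (π n : Measure (E × E)).map Prod.snd = m2 n)
    (C : ℕ → ℝ≥0∞) (c : ℝ≥0∞) (hC : Tendsto C atTop (𝓝 c))
    (hle : ∀ n, ∫⁻ q, ENNReal.ofReal (dist q.1 q.2 ^ p) ∂(π n : Measure (E × E)) ≤ C n) :
    Wp p (ρ1 : Measure E) (ρ2 : Measure E) ≤ c := by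
  haveI : SecondCountableTopology E := UniformSpace.secondCountable_of_separable E
  have ht : IsTightMeasureSet
      {((q : ProbabilityMeasure (E × E)) : Measure (E × E)) | q ∈ Set.range π} := by
    apply IsTightMeasureSet.prodMk
    · refine (tight_range m1 ρ1 h1).subset ?_
      rintro _ ⟨_, ⟨_, ⟨n, rfl⟩, rfl⟩, rfl⟩
      exact ⟨m1 n, ⟨n, rfl⟩, (hf n).symm⟩
    · refine (tight_range m2 ρ2 h2).subset ?_
      rintro _ ⟨_, ⟨_, ⟨n, rfl⟩, rfl⟩, rfl⟩
      exact ⟨m2 n, ⟨n, rfl⟩, (hs n).symm⟩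
  have hcomp := isCompact_closure_of_isTightMeasureSet ht
  letI := pseudoMetrizableSpacePseudoMetric (ProbabilityMeasure (E × E))
  obtain ⟨θ, -, φ, hφ, hθ⟩ := hcomp.tendsto_subseq
    (x := π) (fun n => subset_closure ⟨n, rfl⟩)
  have hfst : (θ : Measure (E × E)).map Prod.fst = ρ1 := by
    have ha := ProbabilityMeasure.tendsto_map_of_tendsto_of_continuous _ _ hθ
      (continuous_fst : Continuous (Prod.fst : E × E → E))
    have hb := h1.comp hφ.tendsto_atTop
    have : θ.map continuous_fst.aemeasurable = ρ1 := by
      refine tendsto_nhds_unique ha (hb.congr fun n => ?_)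
      apply Subtype.ext
      exact (hf (φ n)).symm
    exact congrArg Subtype.val this
  have hsnd : (θ : Measure (E × E)).map Prod.snd = ρ2 := by
    have ha := ProbabilityMeasure.tendsto_map_of_tendsto_of_continuous _ _ hθ
      (continuous_snd : Continuous (Prod.snd : E × E → E))
    have hb := h2.comp hφ.tendsto_atTop
    have : θ.map continuous_snd.aemeasurable = ρ2 := by
      refine tendsto_nhds_unique ha (hb.congr fun n => ?_)
      apply Subtype.ext
      exact (hs (φ n)).symm
    exact congrArg Subtype.val this
  have hcost := lintegral_le_liminf_lintegral_of_forall_isOpen_measure_le_liminf_measure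
    (μ := (θ : Measure (E × E))) (μs := fun n => (π (φ n) : Measure (E × E)))
    (f := fun q : E × E => dist q.1 q.2 ^ p)
    (continuous_dist.rpow_const fun _ => Or.inr hp.le)
    (fun q => Real.rpow_nonneg dist_nonneg p)
    (fun G hG => ProbabilityMeasure.le_liminf_measure_open_of_tendsto hθ hG)
  refine (show Wp p (ρ1 : Measure E) (ρ2 : Measure E) ≤ _ from
    sInf_le ⟨(θ : Measure (E × E)), hfst, hsnd, rfl⟩).trans (hcost.trans ?_)
  rw [← (hC.comp hφ.tendsto_atTop).liminf_eq]
  exact liminf_le_liminf (Eventually.of_forall fun n => hle (φ n))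

theorem stmt14 {E : Type*} [MetricSpace E] [CompleteSpace E]
    [TopologicalSpace.SeparableSpace E] [MeasurableSpace E] [BorelSpace E]
    (p : ℝ) (hp0 : 0 < p) (hp1 : p ≤ 1)
    (K : E → Measure E) (hKmeas : Measurable K)
    (hKprob : ∀ x, IsProbabilityMeasure (K x))
    (hWmeas : Measurable fun q : E × E => Wp p (K q.1) (K q.2))
    (μ ν : Measure E) [IsProbabilityMeasure μ] [IsProbabilityMeasure ν] :
    Wp p (μ.bind K) (ν.bind K) ≤ ∫⁻ x, ∫⁻ y, Wp p (K x) (K y) ∂ν ∂μ := by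
  rw [← lintegral_prod (μ := μ) (ν := ν) (fun q : E × E => Wp p (K q.1) (K q.2))
    hWmeas.aemeasurable]
  by_cases hfin : ∫⁻ q, Wp p (K q.1) (K q.2) ∂(μ.prod ν) = ∞
  · rw [hfin]; exact le_top
  have hk1 : Measurable fun q : E × E => K q.1 := hKmeas.comp measurable_fst
  have hk2 : Measurable fun q : E × E => K q.2 := hKmeas.comp measurable_snd
  have hb1 : (μ.prod ν).bind (fun q => K q.1) = μ.bind K := by
    ext s hs
    rw [Measure.bind_apply hs hk1.aemeasurable, Measure.bind_apply hs hKmeas.aemeasurable,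
      lintegral_prod (fun q : E × E => K q.1 s)
        ((Measure.measurable_coe hs).comp hk1).aemeasurable]
    simp
  have hb2 : (μ.prod ν).bind (fun q => K q.2) = ν.bind K := by
    ext s hs
    rw [Measure.bind_apply hs hk2.aemeasurable, Measure.bind_apply hs hKmeas.aemeasurable,
      lintegral_prod (fun q : E × E => K q.2 s)
        ((Measure.measurable_coe hs).comp hk2).aemeasurable]
    simp
  have hpb : ∀ m : Measure E, IsProbabilityMeasure m → IsProbabilityMeasure (m.bind K) := by
    intro m hm
    refine ⟨?_⟩
    rw [Measure.bind_apply MeasurableSet.univ hKmeas.aemeasurable]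
    simp
  let ρ1 : ProbabilityMeasure E := ⟨μ.bind K, hpb μ inferInstance⟩
  let ρ2 : ProbabilityMeasure E := ⟨ν.bind K, hpb ν inferInstance⟩
  have hall := (weak_aux (μ.prod ν) (fun q => K q.1) hk1 (fun q => hKprob _) ρ1 hb1.symm).and
    ((weak_aux (μ.prod ν) (fun q => K q.2) hk2 (fun q => hKprob _) ρ2 hb2.symm).and
      (slln_aux (μ.prod ν) _ hWmeas hfin))
  obtain ⟨ω, hw1, hw2, hω, hlim⟩ := hall.exists
  refine ENNReal.le_of_forall_pos_le_add fun ε hε _ => ?_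
  have hex : ∀ i, ∃ π : Measure (E × E), π.map Prod.fst = K (ω i).1 ∧
      π.map Prod.snd = K (ω i).2 ∧
      ∫⁻ q, ENNReal.ofReal (dist q.1 q.2 ^ p) ∂π ≤ Wp p (K (ω i).1) (K (ω i).2) + ε := by
    intro i
    have hlt : Wp p (K (ω i).1) (K (ω i).2) < Wp p (K (ω i).1) (K (ω i).2) + ε :=
      ENNReal.lt_add_right (hω i) (by simpa using hε.ne')
    obtain ⟨c, ⟨π, hπ1, hπ2, hπc⟩, hc⟩ := sInf_lt_iff.1 hlt
    exact ⟨π, hπ1, hπ2, hπc.le.trans hc.le⟩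
  choose π hπ1 hπ2 hπc using hex
  have hπp : ∀ i, IsProbabilityMeasure (π i) := by
    intro i
    refine ⟨?_⟩
    have := (hKprob (ω i).1).measure_univ
    rw [← hπ1 i, Measure.map_apply measurable_fst MeasurableSet.univ] at this
    simpa using this
  refine lsc_aux p hp0 _ _ ρ1 ρ2 hw1 hw2 (fun n => avgPM π hπp n) ?_ ?_ _ _
    (hlim.add_const (ε : ℝ≥0∞)) ?_
  · intro n
    refine (avgM_map π n _ measurable_fst).trans ?_
    simp only [hπ1]
    rfl
  · intro n
    refine (avgM_map π n _ measurable_snd).trans ?_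
    simp only [hπ2]
    rfl
  · intro n
    refine (avgM_lintegral π n _).le.trans ?_
    rw [← avgM_const n (ε : ℝ≥0∞)]
    rw [← mul_add, ← Finset.sum_add_distrib]
    gcongr with i hi
    exact hπc i
end

section
/- Let (E,d) be a complete separable metric space with its Borel σ-algebra, let p ∈ (0,1], and for probability measures μ, ν on E let W_p(μ,ν) := inf{∫_{E×E} d(x,y)^p dπ : π a coupling of μ and ν}. Let (K_l)_{l ∈ ℕ} be a sequence of Markov kernels from E to E such that (x,y) ↦ W_p(K_l(x), K_l(y)) is Borel measurable for each l. Suppose μ and ν are probability measures on E that are invariant for every K_l (i.e. μK_l = μ and νK_l = ν for all l), and that ∫_E ∫_E W_p(K_l(x), K_l(y)) μ(dx) ν(dy) → 0 as l → ∞. Then μ = ν. -/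
open MeasureTheory
open scoped ENNReal

lemma aux_W {E : Type*} [MetricSpace E] [MeasurableSpace E]
    (p : ℝ) (f : E → ℝ≥0∞) (hf : Measurable f) (C : ℝ≥0∞) (hC0 : C ≠ 0) (hCt : C ≠ ⊤)
    (hfC : ∀ x y, f x ≤ f y + C * ENNReal.ofReal (dist x y ^ p)) (α β : Measure E) :
    ∫⁻ z, f z ∂α ≤ ∫⁻ z, f z ∂β + C * Wp p α β := by
  have h : (∫⁻ z, f z ∂α - ∫⁻ z, f z ∂β) / C ≤ Wp p α β := by
    refine le_sInf ?_
    rintro c ⟨π, rfl, rfl, rfl⟩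
    rw [ENNReal.div_le_iff hC0 hCt, tsub_le_iff_left, lintegral_map hf measurable_fst,
      lintegral_map hf measurable_snd, mul_comm, ← lintegral_const_mul' _ _ hCt,
      ← lintegral_add_left (show Measurable fun q : E × E => f q.2 from hf.comp measurable_snd)]
    exact lintegral_mono fun q => hfC q.1 q.2
  rwa [ENNReal.div_le_iff hC0 hCt, tsub_le_iff_left, mul_comm] at h

lemma aux_thick {E : Type*} [MetricSpace E] (p : ℝ) (hp0 : 0 < p) (hp1 : p ≤ 1)
    (δ : ℝ) (hδ : 0 < δ) (F : Set E) (x y : E) :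
    (thickenedIndicator hδ F x : ℝ≥0∞) ≤ thickenedIndicator hδ F y +
      ENNReal.ofReal (max 1 δ⁻¹) * ENNReal.ofReal (dist x y ^ p) := by
  have h1 : (thickenedIndicator hδ F x : ℝ) ≤ 1 := by
    exact_mod_cast thickenedIndicator_le_one hδ F x
  have h0 : (0:ℝ) ≤ thickenedIndicator hδ F y := NNReal.coe_nonneg _
  have hL : (thickenedIndicator hδ F x : ℝ) ≤ thickenedIndicator hδ F y + δ⁻¹ * dist x y := by
    have := (lipschitzWith_thickenedIndicator hδ F).dist_le_mul x y
    rw [NNReal.dist_eq] at this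
    have h2 := (abs_le.1 this).2
    simp only [NNReal.coe_inv, Real.coe_toNNReal _ hδ.le] at h2
    linarith
  have key : (thickenedIndicator hδ F x : ℝ) ≤ thickenedIndicator hδ F y
      + max 1 δ⁻¹ * dist x y ^ p := by
    have hd : 0 ≤ dist x y := dist_nonneg
    have hdp : 0 ≤ dist x y ^ p := Real.rpow_nonneg hd p
    rcases le_total (dist x y) 1 with h | h
    · have h3 : dist x y ≤ dist x y ^ p := by
        rcases hd.eq_or_lt with h4 | h4
        · rw [← h4]; exact Real.rpow_nonneg le_rfl p
        · simpa using Real.rpow_le_rpow_of_exponent_ge h4 h hp1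
      have : δ⁻¹ * dist x y ≤ max 1 δ⁻¹ * dist x y ^ p :=
        mul_le_mul (le_max_right _ _) h3 hd (le_trans zero_le_one (le_max_left _ _))
      linarith
    · have h3 : 1 ≤ dist x y ^ p := Real.one_le_rpow h hp0.le
      have : 1 * 1 ≤ max 1 δ⁻¹ * dist x y ^ p :=
        mul_le_mul (le_max_left _ _) h3 zero_le_one (le_trans zero_le_one (le_max_left _ _))
      linarith
  have := ENNReal.ofReal_le_ofReal key
  rw [ENNReal.ofReal_add h0 (by positivity), ENNReal.ofReal_mul (by positivity)] at this
  simpa using this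

theorem stmt15 {E : Type*} [MetricSpace E] [CompleteSpace E]
    [TopologicalSpace.SeparableSpace E] [MeasurableSpace E] [BorelSpace E]
    (p : ℝ) (hp0 : 0 < p) (hp1 : p ≤ 1)
    (K : ℕ → E → Measure E) (hKmeas : ∀ l, Measurable (K l))
    (hKprob : ∀ l x, IsProbabilityMeasure (K l x))
    (hWmeas : ∀ l, Measurable fun q : E × E => Wp p (K l q.1) (K l q.2))
    (μ ν : Measure E) [IsProbabilityMeasure μ] [IsProbabilityMeasure ν]
    (hμinv : ∀ l, μ.bind (K l) = μ) (hνinv : ∀ l, ν.bind (K l) = ν)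
    (hto : Filter.Tendsto
      (fun l => ∫⁻ x, ∫⁻ y, Wp p (K l x) (K l y) ∂ν ∂μ)
      Filter.atTop (nhds 0)) :
    μ = ν := by
  have main : ∀ (f : E → ℝ≥0∞), Measurable f → ∀ C : ℝ≥0∞, C ≠ 0 → C ≠ ⊤ →
      (∀ x y, f x ≤ f y + C * ENNReal.ofReal (dist x y ^ p)) →
      ∫⁻ z, f z ∂μ ≤ ∫⁻ z, f z ∂ν := by
    intro f hf C hC0 hCt hfC
    have step : ∀ l, ∫⁻ z, f z ∂μ ≤ ∫⁻ z, f z ∂ν +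
        C * ∫⁻ x, ∫⁻ y, Wp p (K l x) (K l y) ∂ν ∂μ := by
      intro l
      have hg : Measurable fun x => ∫⁻ z, f z ∂(K l x) :=
        (Measure.measurable_lintegral hf).comp (hKmeas l)
      have e1 : ∫⁻ z, f z ∂μ = ∫⁻ x, ∫⁻ z, f z ∂(K l x) ∂μ := by
        conv_lhs => rw [← hμinv l]
        exact Measure.lintegral_bind (hKmeas l).aemeasurable hf.aemeasurable
      have e2 : ∫⁻ z, f z ∂ν = ∫⁻ x, ∫⁻ z, f z ∂(K l x) ∂ν := by
        conv_lhs => rw [← hνinv l]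
        exact Measure.lintegral_bind (hKmeas l).aemeasurable hf.aemeasurable
      have e3 : ∀ x, ∫⁻ z, f z ∂(K l x) ≤ ∫⁻ z, f z ∂ν + C * ∫⁻ y, Wp p (K l x) (K l y) ∂ν := by
        intro x
        rw [e2, ← lintegral_const_mul' _ _ hCt, ← lintegral_add_left hg]
        calc ∫⁻ z, f z ∂(K l x) = ∫⁻ _ : E, (∫⁻ z, f z ∂(K l x)) ∂ν := by simp
          _ ≤ _ := lintegral_mono fun y => aux_W p f hf C hC0 hCt hfC _ _
      calc ∫⁻ z, f z ∂μ = ∫⁻ x, ∫⁻ z, f z ∂(K l x) ∂μ := e1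
        _ ≤ ∫⁻ x, (∫⁻ z, f z ∂ν + C * ∫⁻ y, Wp p (K l x) (K l y) ∂ν) ∂μ := lintegral_mono e3
        _ = _ := by
          rw [lintegral_add_left measurable_const, lintegral_const_mul' _ _ hCt]; simp
    have lim := (ENNReal.Tendsto.const_mul hto (Or.inr hCt)).const_add (∫⁻ z, f z ∂ν)
    simp only [mul_zero, add_zero] at lim
    exact ge_of_tendsto' lim step
  have hclosed : ∀ F : Set E, IsClosed F → μ F ≤ ν F := by
    intro F hF
    have hδ : ∀ n : ℕ, (0:ℝ) < 1 / ((n:ℝ) + 1) := fun n => Nat.one_div_pos_of_nat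
    have hl := tendsto_one_div_add_atTop_nhds_zero_nat (𝕜 := ℝ)
    refine le_of_tendsto_of_tendsto'
      (tendsto_lintegral_thickenedIndicator_of_isClosed μ hF hδ hl)
      (tendsto_lintegral_thickenedIndicator_of_isClosed ν hF hδ hl) fun n => ?_
    refine main _ ?_ (ENNReal.ofReal (max 1 (1 / ((n:ℝ) + 1))⁻¹)) ?_ ENNReal.ofReal_ne_top
      (aux_thick p hp0 hp1 _ (hδ n) F)
    · exact (thickenedIndicator (hδ n) F).continuous.measurable.coe_nnreal_ennreal
    · exact (ENNReal.ofReal_pos.2 (lt_of_lt_of_le one_pos (le_max_left _ _))).ne'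
  refine Measure.eq_of_le_of_isProbabilityMeasure (Measure.le_iff.2 fun A hA => ?_)
  rw [hA.measure_eq_iSup_isClosed_of_ne_top (measure_ne_top μ A)]
  exact iSup₂_le fun F hFA => iSup_le fun hF => (hclosed F hF).trans (measure_mono hFA)
end

section
/- Let S be a countably infinite set and q : S × S → ℝ satisfy: q(r,j) ≥ 0 for all r ≠ j, the family (q(r,j))_{j≠r} is summable with Σ_{j∈S} q(r,j) = 0 for every r ∈ S, and q_0 := sup_{r∈S}(−q(r,r)) < ∞. Let F_1, …, F_{m+1} be a partition of S into nonempty sets and φ : S → {1,…,m+1} the index map with r ∈ F_{φ(r)}. Define, for i ≠ j in {1,…,m+1}: q^F_{ij} := sup_{r∈F_i} Σ_{k∈F_j} q(r,k) if j < i, q^F_{ij} := inf_{r∈F_i} Σ_{k∈F_j} q(r,k) if j > i, and q^F_{ii} := −Σ_{j≠i} q^F_{ij}. Let ξ^F ∈ ℝ^{m+1} satisfy ξ^F_1 > ξ^F_2 > ⋯ > ξ^F_{m+1} > 0 and set ξ_r := ξ^F_{φ(r)} for r ∈ S. Then for every r ∈ S: Σ_{j∈S} q(r,j) ξ_j ≤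 Σ_{j=1}^{m+1} q^F_{φ(r) j} ξ^F_j, i.e. (Qξ)(r) ≤ (Q^F ξ^F)(φ(r)). -/
/-- The (absolutely convergent) sum `Σ_{k ∈ A} q(r,k)`. -/
noncomputable def rowSumOn {S : Type*} (q : S → S → ℝ) (A : Set S) (r : S) : ℝ :=
  ∑' k : A, q r k

/-- The off-diagonal entries of the matrix `Q^F` associated with the finite
partition `F` of `S`:
`q^F_{ij} = sup_{r ∈ F_i} Σ_{k ∈ F_j} q(r,k)` for `j < i` and
`q^F_{ij} = inf_{r ∈ F_i} Σ_{k ∈ F_j} q(r,k)` for `j > i`. -/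
noncomputable def qFoff {S : Type*} {m : ℕ} (q : S → S → ℝ)
    (F : Fin (m + 1) → Set S) (i j : Fin (m + 1)) : ℝ :=
  if j < i then sSup ((fun r => rowSumOn q (F j) r) '' F i)
  else sInf ((fun r => rowSumOn q (F j) r) '' F i)

/-- The matrix `Q^F` associated with the finite partition `F` of `S`; its
diagonal entries are `q^F_{ii} = -Σ_{j ≠ i} q^F_{ij}`. -/
noncomputable def qF {S : Type*} {m : ℕ} (q : S → S → ℝ)
    (F : Fin (m + 1) → Set S) (i j : Fin (m + 1)) : ℝ :=
  if i = j then -∑ k ∈ Finset.univ.erase i, qFoff q F i k else qFoff q F i j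

theorem aux_group {S : Type*} {m : ℕ} (q : S → S → ℝ) (hsum : ∀ r, Summable (q r))
    (F : Fin (m + 1) → Set S) (φ : S → Fin (m + 1))
    (hpart : ∀ (r : S) (i : Fin (m + 1)), r ∈ F i ↔ φ r = i)
    (g : Fin (m + 1) → ℝ) (r : S) :
    (∑' j, q r j * g (φ j)) = ∑ i, rowSumOn q (F i) r * g i := by
  classical
  have h1 : ∀ j, q r j * g (φ j) = ∑ i, (F i).indicator (q r) j * g i := by
    intro j
    rw [Finset.sum_eq_single (φ j)]
    · rw [Set.indicator_of_mem ((hpart j _).2 rfl)]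
    · intro b _ hb
      rw [Set.indicator_of_notMem (fun h => hb ((hpart j b).1 h).symm), zero_mul]
    · simp
  simp_rw [h1]
  rw [Summable.tsum_finsetSum (fun i _ => ((hsum r).indicator (F i)).mul_right (g i))]
  refine Finset.sum_congr rfl fun i _ => ?_
  rw [tsum_mul_right, rowSumOn, tsum_subtype (F i) (q r)]

theorem aux_bound {S : Type*} (q : S → S → ℝ)
    (hoff : ∀ r j, r ≠ j → 0 ≤ q r j)
    (hsum : ∀ r, Summable (q r))
    (hzero : ∀ r, ∑' j, q r j = 0)
    (A : Set S) (s : S) (hs : s ∉ A) :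
    0 ≤ rowSumOn q A s ∧ rowSumOn q A s ≤ - q s s := by
  classical
  constructor
  · refine tsum_nonneg fun k => hoff _ _ ?_
    rintro h
    exact hs (h ▸ k.2)
  · have h2 : HasSum (fun k => q s k - (if k = s then q s s else 0)) (0 - q s s) := by
      refine HasSum.sub ?_ (hasSum_ite_eq s (q s s))
      rw [← hzero s]
      exact (hsum s).hasSum
    rw [rowSumOn, tsum_subtype A (q s), ← zero_sub]
    refine hasSum_le ?_ ((hsum s).indicator A).hasSum h2
    intro k
    by_cases hk : k = s
    · subst hk
      simp [hs]
    · by_cases hA : k ∈ A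
      · simp [hA, hk]
      · simp [hA, hk, hoff s k (Ne.symm hk)]

theorem stmt16 {S : Type*} [Countable S] [Infinite S]
    (q : S → S → ℝ)
    (hoff : ∀ r j, r ≠ j → 0 ≤ q r j)
    (hsum : ∀ r, Summable (q r))
    (hzero : ∀ r, ∑' j, q r j = 0)
    (q₀ : ℝ) (hq₀ : ∀ r, -q r r ≤ q₀)
    {m : ℕ} (F : Fin (m + 1) → Set S) (φ : S → Fin (m + 1))
    (hFne : ∀ i, (F i).Nonempty)
    (hpart : ∀ (r : S) (i : Fin (m + 1)), r ∈ F i ↔ φ r = i)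
    (ξF : Fin (m + 1) → ℝ)
    (hanti : StrictAnti ξF) (hpos : 0 < ξF (Fin.last m)) :
    ∀ r : S, (∑' j, q r j * ξF (φ j)) ≤ ∑ j, qF q F (φ r) j * ξF j := by
  classical
  intro r
  rw [aux_group q hsum F φ hpart ξF r]
  have hR : ∑ i, rowSumOn q (F i) r = 0 := by
    have := aux_group q hsum F φ hpart (fun _ => 1) r
    simp only [mul_one] at this
    rw [← this, hzero]
  have hQ : ∑ j, qF q F (φ r) j = 0 := by
    rw [← Finset.add_sum_erase _ _ (Finset.mem_univ (φ r))]
    have : ∑ j ∈ Finset.univ.erase (φ r), qF q F (φ r) j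
        = ∑ j ∈ Finset.univ.erase (φ r), qFoff q F (φ r) j := by
      refine Finset.sum_congr rfl fun j hj => ?_
      rw [qF, if_neg (Finset.ne_of_mem_erase hj).symm]
    rw [this, qF, if_pos rfl]
    ring
  have key : ∑ j, rowSumOn q (F j) r * (ξF j - ξF (φ r))
      ≤ ∑ j, qF q F (φ r) j * (ξF j - ξF (φ r)) := by
    refine Finset.sum_le_sum fun j _ => ?_
    have hr : r ∈ F (φ r) := (hpart r _).2 rfl
    have hb : φ r ≠ j → ∀ s ∈ F (φ r), 0 ≤ rowSumOn q (F j) s ∧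
        rowSumOn q (F j) s ≤ q₀ := by
      intro hne s hs
      have h := aux_bound q hoff hsum hzero (F j) s
        (fun h => hne (((hpart s _).1 hs).symm.trans ((hpart s _).1 h)))
      exact ⟨h.1, h.2.trans (hq₀ s)⟩
    rcases lt_trichotomy j (φ r) with hlt | heq | hgt
    · rw [qF, if_neg hlt.ne', qFoff, if_pos hlt]
      refine mul_le_mul_of_nonneg_right ?_ (sub_nonneg.2 (hanti hlt).le)
      refine le_csSup ⟨q₀, ?_⟩ ⟨r, hr, rfl⟩
      rintro _ ⟨s, hs, rfl⟩
      exact (hb hlt.ne' s hs).2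
    · rw [heq]; simp
    · rw [qF, if_neg hgt.ne, qFoff, if_neg hgt.not_gt]
      refine mul_le_mul_of_nonpos_right ?_ (sub_nonpos.2 (hanti hgt).le)
      refine csInf_le ⟨0, ?_⟩ ⟨r, hr, rfl⟩
      rintro _ ⟨s, hs, rfl⟩
      exact (hb hgt.ne s hs).1
  simp only [mul_sub, Finset.sum_sub_distrib, ← Finset.sum_mul, hR, hQ] at key
  simpa using key
end
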